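/- Let G be a finite simple graph with no isolated vertices and let Γ_fec be the set of fractional edge covers of G. If γ is an extreme point of Γ_fec, then every connected component of the subgraph H with edge set supp(γ) that contains no pendant edge of H is a cycle of odd length. -/

import Mathlib

open Finset

noncomputable section
open scoped Classical

variable {V : Type*}

/-- The set of admissible densities for a family `Γ` of objects on the edge set of `G`.
Densities are elements of `ℝ^E_{≥0}`, modeled as nonnegative functions on `Sym2 V`
vanishing outside the edge set of `G`. `ρ` is admissible if `ℓ_ρ(γ) ≥ 1` for all `γ ∈ Γ`. -/
def Adm [Fintype V] [DecidableEq V] (G : SimpleGraph V) (Γ : Set (Sym2 V → ℝ)) :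
    Set (Sym2 V → ℝ) :=
  {ρ | (∀ e, 0 ≤ ρ e) ∧ (∀ e ∉ G.edgeSet, ρ e = 0) ∧
    ∀ γ ∈ Γ, 1 ≤ ∑ e ∈ G.edgeFinset, γ e * ρ e}

/-- The `p`-energy of a density `ρ` with edge weights `σ`: `Σ_e σ(e) ρ(e)^p`. -/
def energy [Fintype V] [DecidableEq V] (p : ℝ) (σ : Sym2 V → ℝ) (G : SimpleGraph V)
    (ρ : Sym2 V → ℝ) : ℝ :=
  ∑ e ∈ G.edgeFinset, σ e * ρ e ^ p

/-- The `p`-modulus of a family `Γ` with edge weights `σ`: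
the infimum of the `p`-energy over admissible densities. -/
def Modulus [Fintype V] [DecidableEq V] (p : ℝ) (σ : Sym2 V → ℝ) (G : SimpleGraph V)
    (Γ : Set (Sym2 V → ℝ)) : ℝ :=
  sInf (energy p σ G '' Adm G Γ)

/-- The unweighted 2-energy `Σ_e ρ(e)²`. -/
def energy2 [Fintype V] [DecidableEq V] (G : SimpleGraph V) (ρ : Sym2 V → ℝ) : ℝ :=
  ∑ e ∈ G.edgeFinset, ρ e ^ 2

/-- The unweighted 2-modulus. -/
def Mod2 [Fintype V] [DecidableEq V] (G : SimpleGraph V) (Γ : Set (Sym2 V → ℝ)) : ℝ :=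
  sInf (energy2 G '' Adm G Γ)

/-- `C` is an edge cover of `G`: a set of edges of `G` meeting every vertex. -/
def IsEdgeCover [Fintype V] [DecidableEq V] (G : SimpleGraph V) (C : Finset (Sym2 V)) : Prop :=
  ↑C ⊆ G.edgeSet ∧ ∀ v : V, ∃ e ∈ C, v ∈ e

/-- The family `Γ_ec` of indicator vectors of edge covers of `G`. -/
def Γec [Fintype V] [DecidableEq V] (G : SimpleGraph V) : Set (Sym2 V → ℝ) :=
  {γ | ∃ C : Finset (Sym2 V), IsEdgeCover G C ∧ γ = fun e => if e ∈ C then 1 else 0}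

/-- The family `Γ_fec` of fractional edge covers of `G`: nonnegative vectors on the edge
set with `Σ_{e ∈ δ(v)} γ(e) ≥ 1` at every vertex `v`. -/
def Γfec [Fintype V] [DecidableEq V] (G : SimpleGraph V) : Set (Sym2 V → ℝ) :=
  {γ | (∀ e, 0 ≤ γ e) ∧ (∀ e ∉ G.edgeSet, γ e = 0) ∧
    ∀ v : V, 1 ≤ ∑ e ∈ G.incidenceFinset v, γ e}

/-- The family `Γ_star` of indicator vectors of the stars `δ(v)`, `v ∈ V`. -/
def Γstar [Fintype V] [DecidableEq V] (G : SimpleGraph V) : Set (Sym2 V → ℝ) :=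
  {γ | ∃ v : V, γ = fun e => if e ∈ G.incidenceFinset v then 1 else 0}

/-- The subgraph of `G` whose edge set is the support `{e : γ(e) > 0}` of `γ`. -/
def suppGraph (G : SimpleGraph V) (γ : Sym2 V → ℝ) : SimpleGraph V where
  Adj u v := G.Adj u v ∧ 0 < γ s(u, v)
  symm := by
    refine ⟨?_⟩
    intro u v h
    refine ⟨h.1.symm, ?_⟩
    rw [Sym2.eq_swap]
    exact h.2
  loopless := ⟨fun v h => G.loopless.irrefl v h.1⟩

/-!
If `γ` is an extreme point, a vector supported on `supp(γ)` whose sum around every vertex vanishes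
must be zero, since small multiples of it may be added to and subtracted from `γ`. So the incidence
vectors of the edges of `H` are linearly independent. A connected component therefore has at most as
many edges as vertices, and without pendant edges all its degrees are at least two; by the handshake
lemma they are all equal to two, and the component is a cycle. Its length is odd because the
alternating sum of the incidence vectors along a closed walk of even length telescopes to zero.
-/

section IncidenceMatrix

variable {R : Type*} [DecidableEq V] {H : SimpleGraph V} [DecidableRel H.Adj]

lemma col_incMatrix_of_adj [AddMonoidWithOne R] {a b : V} (hab : H.Adj a b) :
    (H.incMatrix R).col s(a, b) = Pi.single a 1 + Pi.single b 1 := by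
  ext v
  have hne := hab.ne
  by_cases hva : v = a <;> by_cases hvb : v = b <;>
    simp_all [SimpleGraph.incMatrix_apply', SimpleGraph.mk'_mem_incidenceSet_iff]

lemma extend_pi_single [Zero R] {W : Type*} [DecidableEq W] {f : W → V}
    (hf : Function.Injective f) (a : W) (r : R) :
    Function.extend f (Pi.single a r) 0 = Pi.single (f a) r := by
  ext v
  by_cases hv : ∃ b, f b = v
  · obtain ⟨b, rfl⟩ := hv
    simp [hf.extend_apply, Pi.single_apply, hf.eq_iff]
  · rw [Function.extend_apply' _ _ _ hv, Pi.single_eq_of_ne fun h => hv ⟨a, h.symm⟩, Pi.zero_apply]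

lemma linearIndepOn_col_incMatrix_of_injective_hom [Semiring R] {W : Type*} [DecidableEq W]
    {K : SimpleGraph W} [DecidableRel K.Adj] (f : K →g H) (hf : Function.Injective f)
    (hH : LinearIndepOn R (H.incMatrix R).col H.edgeSet) :
    LinearIndepOn R (K.incMatrix R).col K.edgeSet := by
  have hmaps : Sym2.map f '' K.edgeSet ⊆ H.edgeSet := by
    rintro _ ⟨e, he, rfl⟩
    exact f.map_mem_edgeSet he
  have hcomp : LinearIndepOn R ((H.incMatrix R).col ∘ Sym2.map f) K.edgeSet :=
    (hH.mono hmaps).comp_of_image (Sym2.map.injective hf).injOn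
  refine LinearIndepOn.of_comp (Function.ExtendByZero.linearMap R f) (hcomp.congr ?_)
  rintro ⟨a, b⟩ hab
  have hab : K.Adj a b := hab
  change (H.incMatrix R).col s(f a, f b) =
    Function.ExtendByZero.linearMap R f ((K.incMatrix R).col s(a, b))
  rw [col_incMatrix_of_adj hab, col_incMatrix_of_adj (f.map_adj hab), map_add]
  exact congrArg₂ _ (extend_pi_single hf a 1).symm (extend_pi_single hf b 1).symm

lemma card_edgeFinset_le_card_of_linearIndepOn_col_incMatrix [Ring R] [StrongRankCondition R]
    [Fintype V] (hH : LinearIndepOn R (H.incMatrix R).col H.edgeSet) :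
    #H.edgeFinset ≤ Fintype.card V := by
  simpa [SimpleGraph.edgeFinset_card] using hH.fintype_card_le_finrank

lemma sum_neg_one_pow_smul_col_incMatrix_walk [Ring R] {u v : V} (p : H.Walk u v) :
    ∑ i ∈ range p.length, (-1 : R) ^ i • (H.incMatrix R).col s(p.getVert i, p.getVert (i + 1)) =
      Pi.single u 1 - (-1 : R) ^ p.length • Pi.single v 1 := by
  let term (i : ℕ) : V → R := (-1 : R) ^ i • Pi.single (p.getVert i) 1
  calc ∑ i ∈ range p.length, (-1 : R) ^ i • (H.incMatrix R).col s(p.getVert i, p.getVert (i + 1))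
    _ = ∑ i ∈ range p.length, (term i - term (i + 1)) := by
        refine Finset.sum_congr rfl fun i hi => ?_
        rw [col_incMatrix_of_adj (p.adj_getVert_succ (Finset.mem_range.1 hi)), smul_add]
        simp [term, pow_succ]
    _ = term 0 - term p.length := Finset.sum_range_sub' term p.length
    _ = Pi.single u 1 - (-1 : R) ^ p.length • Pi.single v 1 := by simp [term]

lemma odd_length_of_isTrail_of_linearIndepOn_col_incMatrix [Ring R] [Nontrivial R]
    (hH : LinearIndepOn R (H.incMatrix R).col H.edgeSet) {w : V} {c : H.Walk w w}
    (hc : c.IsTrail) (hnil : ¬ c.Nil) : Odd c.length := by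
  by_contra hodd
  have hpos : 0 < c.length := SimpleGraph.Walk.not_nil_iff_lt_length.1 hnil
  let edge (i : Fin c.length) : H.edgeSet :=
    ⟨s(c.getVert i, c.getVert (i + 1)), c.adj_getVert_succ i.2⟩
  have hedge : Function.Injective edge := by
    intro i j hij
    have hij : c.edges[(i : ℕ)]'(by simp) = c.edges[(j : ℕ)]'(by simp) := by
      simpa only [SimpleGraph.Walk.getElem_edges] using congrArg Subtype.val hij
    exact Fin.ext ((List.Nodup.getElem_inj_iff hc.edges_nodup).1 hij)
  have hsum : ∑ i : Fin c.length, (-1 : R) ^ (i : ℕ) • (H.incMatrix R).col (edge i) = 0 := by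
    rw [← Finset.sum_range fun i =>
      (-1 : R) ^ i • (H.incMatrix R).col s(c.getVert i, c.getVert (i + 1)),
      sum_neg_one_pow_smul_col_incMatrix_walk, (Nat.not_odd_iff_even.1 hodd).neg_one_pow,
      one_smul, sub_self]
  have hcoeff := Fintype.linearIndependent_iff.1 (hH.linearIndependent.comp edge hedge) _ hsum
  simpa using hcoeff ⟨0, hpos⟩

end IncidenceMatrix

section Regular

variable {H : SimpleGraph V}

lemma isRegularOfDegree_of_two_mul_card_edgeFinset_le [Fintype V] [DecidableRel H.Adj] {d : ℕ}
    (hdeg : ∀ v, d ≤ H.degree v) (hcard : 2 * #H.edgeFinset ≤ d * Fintype.card V) :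
    H.IsRegularOfDegree d := by
  have hsum : ∑ v, H.degree v ≤ ∑ _v : V, d := by
    rw [H.sum_degrees_eq_twice_card_edges]
    simpa [mul_comm] using hcard
  have heq : ∑ _v : V, d = ∑ v, H.degree v :=
    (Finset.sum_le_sum fun v _ => hdeg v).antisymm hsum
  intro v
  exact ((Finset.sum_eq_sum_iff_of_le fun v _ => hdeg v).1 heq v (Finset.mem_univ v)).symm

lemma exists_isCycle_of_connected_of_isRegularOfDegree_two [Finite V] [H.LocallyFinite]
    (hconn : H.Connected) (hreg : H.IsRegularOfDegree 2) (w : V) :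
    ∃ c : H.Walk w w, c.IsCycle ∧ ∀ e ∈ H.edgeSet, e ∈ c.edges := by
  have hcycles : H.IsCycles := by
    intro v _
    rw [Set.ncard_eq_toFinset_card']
    exact hreg v
  have hne : (H.neighborSet w).Nonempty :=
    SimpleGraph.degree_pos_iff_nonempty.1 (hreg w ▸ two_pos)
  obtain ⟨c, hc, hverts⟩ := hcycles.exists_cycle_toSubgraph_verts_eq_connectedComponentSupp
    (SimpleGraph.ConnectedComponent.connectedComponentMk_mem (v := w)) hne
  refine ⟨c, hc, ?_⟩
  rintro ⟨x, y⟩ hxy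
  have hx : x ∈ c.toSubgraph.verts := by
    rw [hverts]
    exact SimpleGraph.ConnectedComponent.sound (hconn x w)
  exact SimpleGraph.Walk.adj_toSubgraph_iff_mem_edges.1
    ((hc.adj_toSubgraph_iff_of_isCycles hcycles hx y).2 hxy)

end Regular

section Component

variable {R : Type*} [Fintype V] {H : SimpleGraph V} [DecidableRel H.Adj]

lemma two_le_degree_of_reachable_of_degree_ne_one {w u x : V} (hwu : H.Adj w u)
    (hx : H.Reachable w x) (hdeg : H.degree x ≠ 1) : 2 ≤ H.degree x := by
  have hpos : 0 < H.degree x := by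
    rcases eq_or_ne w x with rfl | hne
    · exact (H.degree_pos_iff_exists_adj w).2 ⟨u, hwu⟩
    · exact hx.degree_pos_right hne
  lia

lemma degree_toSimpleGraph (C : H.ConnectedComponent) [DecidableRel C.toSimpleGraph.Adj] (v : C) :
    C.toSimpleGraph.degree v = H.degree v := by
  have hsub : H.neighborSet v ⊆ C.supp := fun _ hu => C.mem_supp_of_adj_mem_supp v.2 hu
  rw [← SimpleGraph.degree_induce_of_neighborSet_subset (G := H) (s := C.supp) (v := v) hsub]
  congr!

variable [DecidableEq V]

lemma exists_isCycle_odd_length_of_connected [Ring R] [StrongRankCondition R]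
    (hH : LinearIndepOn R (H.incMatrix R).col H.edgeSet) (hconn : H.Connected)
    (hdeg : ∀ v, 2 ≤ H.degree v) (w : V) :
    ∃ c : H.Walk w w, c.IsCycle ∧ Odd c.length ∧ ∀ e ∈ H.edgeSet, e ∈ c.edges := by
  have : Nontrivial R := nontrivial_of_invariantBasisNumber R
  have hreg : H.IsRegularOfDegree 2 := isRegularOfDegree_of_two_mul_card_edgeFinset_le hdeg
    (Nat.mul_le_mul_left 2 (card_edgeFinset_le_card_of_linearIndepOn_col_incMatrix hH))
  obtain ⟨c, hc, hedges⟩ := exists_isCycle_of_connected_of_isRegularOfDegree_two hconn hreg w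
  exact ⟨c, hc, odd_length_of_isTrail_of_linearIndepOn_col_incMatrix hH hc.isTrail hc.not_nil,
    hedges⟩

theorem exists_isCycle_odd_length_of_degree_ne_one [Ring R] [StrongRankCondition R]
    (hH : LinearIndepOn R (H.incMatrix R).col H.edgeSet) {w u : V} (hwu : H.Adj w u)
    (hdeg : ∀ x, H.Reachable w x → H.degree x ≠ 1) :
    ∃ c : H.Walk w w, c.IsCycle ∧ Odd c.length ∧
      ∀ x y, H.Adj x y → H.Reachable w x → s(x, y) ∈ c.edges := by
  let C := H.connectedComponentMk w
  have hinj : Function.Injective C.toSimpleGraph_hom := Subtype.val_injective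
  have hwC : w ∈ C := SimpleGraph.ConnectedComponent.connectedComponentMk_mem
  have hreach (x : V) (hx : x ∈ C) : H.Reachable w x := C.reachable_of_mem_supp hwC hx
  have hdegC (v : C) : 2 ≤ C.toSimpleGraph.degree v := by
    rw [degree_toSimpleGraph]
    exact two_le_degree_of_reachable_of_degree_ne_one hwu (hreach v v.2) (hdeg v (hreach v v.2))
  obtain ⟨c, hc, hodd, hedges⟩ := exists_isCycle_odd_length_of_connected
    (linearIndepOn_col_incMatrix_of_injective_hom C.toSimpleGraph_hom hinj hH)
    C.connected_toSimpleGraph hdegC ⟨w, hwC⟩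
  let d : H.Walk w w := c.map C.toSimpleGraph_hom
  have hlength : d.length = c.length := c.length_map C.toSimpleGraph_hom
  have hdedges : d.edges = c.edges.map (Sym2.map C.toSimpleGraph_hom) :=
    c.edges_map C.toSimpleGraph_hom
  refine ⟨d, hc.map hinj, hlength ▸ hodd, fun x y hxy hx => ?_⟩
  have hxC : x ∈ C := SimpleGraph.ConnectedComponent.sound hx.symm
  have hyC : y ∈ C := C.mem_supp_of_adj_mem_supp hxC hxy
  rw [hdedges]
  exact List.mem_map_of_mem (f := Sym2.map C.toSimpleGraph_hom)
    (hedges s(⟨x, hxC⟩, ⟨y, hyC⟩) ((C.toSimpleGraph_adj hxC hyC).2 hxy))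

end Component

section ExtremePoints

lemma eq_zero_of_add_mem_of_sub_mem_of_mem_extremePoints {𝕜 E : Type*} [Field 𝕜] [LinearOrder 𝕜]
    [IsStrictOrderedRing 𝕜] [AddCommGroup E] [Module 𝕜 E] {A : Set E} {x d : E}
    (hx : x ∈ A.extremePoints 𝕜) (hadd : x + d ∈ A) (hsub : x - d ∈ A) : d = 0 := by
  have hmid : x ∈ openSegment 𝕜 (x + d) (x - d) :=
    ⟨1 / 2, 1 / 2, one_half_pos, one_half_pos, add_halves 1, by module⟩
  simpa using hx.2 hadd hsub hmid

lemma exists_pos_forall_mul_abs_le {ι 𝕜 : Type*} [Finite ι] [Field 𝕜] [LinearOrder 𝕜]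
    [IsStrictOrderedRing 𝕜] {γ x : ι → 𝕜} (hγ : ∀ i, 0 ≤ γ i) (hx : ∀ i, x i ≠ 0 → 0 < γ i) :
    ∃ ε > 0, ∀ i, ε * |x i| ≤ γ i := by
  have hpointwise (i : ι) : ∃ ε : Set.Ioi (0 : 𝕜), ε.1 * |x i| ≤ γ i := by
    by_cases hxi : x i = 0
    · exact ⟨⟨1, one_pos⟩, by simpa [hxi] using hγ i⟩
    · have hpos : 0 < |x i| := abs_pos.2 hxi
      exact ⟨⟨γ i / |x i|, div_pos (hx i hxi) hpos⟩, (div_mul_cancel₀ _ hpos.ne').le⟩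
  choose δ hδ using hpointwise
  obtain ⟨ε, hε⟩ := Finite.exists_ge δ
  refine ⟨ε, ε.2, fun i => ?_⟩
  calc ε.1 * |x i| ≤ (δ i).1 * |x i| :=
        mul_le_mul_of_nonneg_right (Subtype.coe_le_coe.2 (hε i)) (abs_nonneg _)
    _ ≤ γ i := hδ i

end ExtremePoints

section FractionalEdgeCover

variable {G : SimpleGraph V} {γ : Sym2 V → ℝ}

lemma mem_edgeSet_suppGraph {e : Sym2 V} :
    e ∈ (suppGraph G γ).edgeSet ↔ e ∈ G.edgeSet ∧ 0 < γ e := by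
  induction e with | _ a b => rfl

variable [Fintype V] [DecidableEq V]

lemma add_mem_Γfec {x : Sym2 V → ℝ} (hγ : γ ∈ Γfec G) (hle : ∀ e, |x e| ≤ γ e)
    (hsum : ∀ v, ∑ e ∈ G.incidenceFinset v, x e = 0) : γ + x ∈ Γfec G := by
  obtain ⟨-, hedge, hcover⟩ := hγ
  refine ⟨fun e => ?_, fun e he => ?_, fun v => ?_⟩
  · simpa using neg_le_iff_add_nonneg'.1 (abs_le.1 (hle e)).1
  · have hxe : x e = 0 := abs_nonpos_iff.1 (hedge e he ▸ hle e)
    simp [hedge e he, hxe]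
  · simpa [Finset.sum_add_distrib, hsum v] using hcover v

lemma eq_zero_of_mem_extremePoints_Γfec (hγ : γ ∈ (Γfec G).extremePoints ℝ) {x : Sym2 V → ℝ}
    (hsupp : ∀ e, x e ≠ 0 → 0 < γ e) (hsum : ∀ v, ∑ e ∈ G.incidenceFinset v, x e = 0) :
    x = 0 := by
  obtain ⟨ε, hε, hle⟩ := exists_pos_forall_mul_abs_le hγ.1.1 hsupp
  have habs (e : Sym2 V) : |(ε • x) e| ≤ γ e := by simpa [abs_mul, abs_of_pos hε] using hle e
  have hsumε (v : V) : ∑ e ∈ G.incidenceFinset v, (ε • x) e = 0 := by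
    simp [← Finset.mul_sum, hsum v]
  have hadd : γ + ε • x ∈ Γfec G := add_mem_Γfec hγ.1 habs hsumε
  have hsub : γ - ε • x ∈ Γfec G := by
    rw [sub_eq_add_neg]
    exact add_mem_Γfec hγ.1 (by simpa using habs) (by simpa using hsumε)
  exact (smul_eq_zero.1
    (eq_zero_of_add_mem_of_sub_mem_of_mem_extremePoints hγ hadd hsub)).resolve_left hε.ne'

lemma linearIndepOn_col_incMatrix_suppGraph (hγ : γ ∈ (Γfec G).extremePoints ℝ) :
    LinearIndepOn ℝ ((suppGraph G γ).incMatrix ℝ).col (suppGraph G γ).edgeSet := by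
  rw [← SimpleGraph.coe_edgeFinset, linearIndepOn_finset_iff]
  intro f hf
  let x : Sym2 V → ℝ := (suppGraph G γ).edgeSet.indicator f
  have hsupp (e : Sym2 V) (he : x e ≠ 0) : 0 < γ e :=
    (mem_edgeSet_suppGraph.1 (Set.mem_of_indicator_ne_zero he)).2
  have hsum (v : V) : ∑ e ∈ G.incidenceFinset v, x e = 0 := by
    rw [← Pi.zero_apply (M := fun _ => ℝ) v, ← hf]
    simp only [x, Set.indicator_apply, Finset.sum_apply, Pi.smul_apply, smul_eq_mul,
      Matrix.col_apply, SimpleGraph.incMatrix_apply', mul_ite, mul_one, mul_zero,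
      ← Finset.sum_filter]
    refine Finset.sum_congr ?_ fun _ _ => rfl
    ext e
    simp only [mem_edgeSet_suppGraph, Finset.mem_filter, SimpleGraph.mem_incidenceFinset,
      SimpleGraph.incidenceSet, Set.mem_ofPred_eq, SimpleGraph.mem_edgeFinset]
    tauto
  have hx : x = 0 := eq_zero_of_mem_extremePoints_Γfec hγ hsupp hsum
  intro e he
  simpa [x, SimpleGraph.mem_edgeFinset.1 he] using congrFun hx e

end FractionalEdgeCover

/-- If `γ` is an extreme point of the set of fractional edge covers, then every connected
component of the support graph `H` that contains an edge but no pendant edge (no vertex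
of `H`-degree 1) is a cycle of odd length. -/
theorem extremePoint_nonpendant_component_oddCycle [Fintype V] [DecidableEq V]
    (G : SimpleGraph V) (hiso : ∀ v : V, ∃ u, G.Adj v u) (γ : Sym2 V → ℝ)
    (hγ : γ ∈ (Γfec G).extremePoints ℝ) :
    ∀ w u : V, (suppGraph G γ).Adj w u →
      (∀ x : V, (suppGraph G γ).Reachable w x → (suppGraph G γ).degree x ≠ 1) →
      ∃ c : (suppGraph G γ).Walk w w, c.IsCycle ∧ Odd c.length ∧
        ∀ x y : V, (suppGraph G γ).Adj x y → (suppGraph G γ).Reachable w x →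
          s(x, y) ∈ c.edges := by
  intro w u hwu hdeg
  exact exists_isCycle_odd_length_of_degree_ne_one (linearIndepOn_col_incMatrix_suppGraph hγ)
    hwu hdeg
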